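/- arXiv:2201.10754 — 10 statements merged into one kernel-verified Lean document; each statement's English description precedes it below -/
import Mathlib

section
/- Let Q be a commutative, integral quantale. Every hypercomplete symmetric Q-category (Z,γ) is injective: for all symmetric Q-categories (X,α) and (Y,β), every fully faithful Q-functor g : (X,α) → (Y,β), and every Q-functor f : (X,α) → (Z,γ), there exists a Q-functor h : (Y,β) → (Z,γ) with γ (h (g x)) (f x) = 1 for all x ∈ X. -/
/-!
The proof extends `f` one point at a time and takes a maximal extension. A partial extension is
encoded as a relation `R ⊆ Y × Z`, not required to be single-valued, with `β y y' ≤ γ z z'`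
whenever `(y, z), (y', z') ∈ R`. Such relations are closed under unions of chains, and
`{(g x, f x)}` is one of them because `g` is fully faithful and `f` is a `Q`-functor, so Zorn's
lemma gives a maximal one containing it. By hypercompleteness of `Z` a maximal relation is total:
for `y : Y` the weight `μ z = ⨆ (y', z) ∈ R, β y' y` satisfies `μ z * μ z' ≤ γ z z'`, and a point
`w` with `μ z ≤ γ z w` allows `(y, w)` to be added to `R`. Any choice function `h` for a maximal
relation works; `h ∘ g ≅ f` holds because `(g x, h (g x))` and `(g x, f x)` both lie in `R`.
-/

/-- Every hypercomplete symmetric Q-category is injective. -/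
theorem hypercomplete_is_injective
    {Q : Type*} [CompleteLattice Q] [CommMonoid Q] [IsQuantale Q]
    (hint : (⊤ : Q) = 1)
    {X Y Z : Type*} (α : X → X → Q) (β : Y → Y → Q) (γ : Z → Z → Q)
    (hα1 : ∀ x, α x x = 1)
    (hαsym : ∀ x y, α x y = α y x)
    (hαtrans : ∀ x y z, α y z * α x y ≤ α x z)
    (hβ1 : ∀ y, β y y = 1)
    (hβsym : ∀ y y', β y y' = β y' y)
    (hβtrans : ∀ x y z, β y z * β x y ≤ β x z)
    (hγ1 : ∀ z, γ z z = 1)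
    (hγsym : ∀ z z', γ z z' = γ z' z)
    (hγtrans : ∀ x y z, γ y z * γ x y ≤ γ x z)
    (hZhc : ∀ μ : Z → Q, (∀ z z', μ z * μ z' ≤ γ z z') → ∃ w, ∀ z, μ z ≤ γ z w)
    (g : X → Y) (hg : ∀ x x', β (g x) (g x') = α x x')
    (f : X → Z) (hf : ∀ x x', α x x' ≤ γ (f x) (f x')) :
    ∃ h : Y → Z, (∀ y y', β y y' ≤ γ (h y) (h y')) ∧ ∀ x, γ (h (g x)) (f x) = 1 := by
  have hle : ∀ q : Q, q ≤ 1 := fun q => hint ▸ le_top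
  let S : Set (Set (Y × Z)) := {R | ∀ p ∈ R, ∀ q ∈ R, β p.1 q.1 ≤ γ p.2 q.2}
  have hbase : Set.range (fun x => (g x, f x)) ∈ S := by
    rintro _ ⟨x, rfl⟩ _ ⟨x', rfl⟩
    exact (hg x x').le.trans (hf x x')
  obtain ⟨R, hR0, hR⟩ := zorn_subset_nonempty S (fun c hc hchain _ => by
    refine ⟨⋃₀ c, ?_, fun s hs => Set.subset_sUnion_of_mem hs⟩
    rintro p ⟨A, hA, hpA⟩ q ⟨B, hB, hqB⟩
    rcases hchain.total hA hB with h | h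
    · exact hc hB p (h hpA) q hqB
    · exact hc hA p hpA q (h hqB)) _ hbase
  have hRS : ∀ p ∈ R, ∀ q ∈ R, β p.1 q.1 ≤ γ p.2 q.2 := hR.prop
  have htotal : ∀ y, ∃ w, (y, w) ∈ R := by
    intro y
    obtain ⟨w, hw⟩ := hZhc (fun z => ⨆ t : {y' // (y', z) ∈ R}, β t.1 y) (by
      intro z z'
      simp only [Quantale.iSup_mul_distrib, Quantale.mul_iSup_distrib]
      refine iSup_le fun t => iSup_le fun s => ?_
      calc β s.1 y * β t.1 y = β y t.1 * β s.1 y := by rw [mul_comm, hβsym t.1 y]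
        _ ≤ β s.1 t.1 := hβtrans _ _ _
        _ ≤ γ z z' := hRS _ s.2 _ t.2)
    have hyw : ∀ p ∈ R, β p.1 y ≤ γ p.2 w := fun p hp =>
      (le_iSup (fun t : {y' // (y', p.2) ∈ R} => β t.1 y) ⟨p.1, hp⟩).trans (hw p.2)
    have hins : insert (y, w) R ∈ S := by
      rintro p (rfl | hp) q (rfl | hq)
      · exact ((hβ1 y).trans (hγ1 w).symm).le
      · rw [hβsym, hγsym]
        exact hyw q hq
      · exact hyw p hp
      · exact hRS p hp q hq
    exact ⟨w, hR.le_of_ge hins (Set.subset_insert _ _) (Set.mem_insert _ _)⟩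
  choose h hh using htotal
  refine ⟨h, fun y y' => hRS _ (hh y) _ (hh y'), fun x => le_antisymm (hle _) ?_⟩
  exact (hβ1 (g x)).ge.trans (hRS _ (hh (g x)) _ (hR0 ⟨x, rfl⟩))
end

section
/- Let Q be a commutative, integral quantale. If a symmetric Q-category (Z,γ) is injective (for all symmetric Q-categories (X,α) and (Y,β), every fully faithful Q-functor g : (X,α) → (Y,β) and every Q-functor f : (X,α) → (Z,γ) admit a Q-functor h : (Y,β) → (Z,γ) with γ (h (g x)) (f x) = 1 for all x), then (Z,γ) is hypercomplete. -/
/-!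
Adjoin one point `∗` to `Z`. The function `μ` may fail `μ x * γ x y ≤ μ y`, so its saturation
`l z = ⨆ a, μ a * γ a z` is used as the hom `γ' z ∗` (lemmas `saturation_mul_hom_le` and
`saturation_mul_saturation_le` give transitivity). Since `Z` embeds fully faithfully in this
extension, injectivity extends the identity of `Z`, up to isomorphism, to a Q-functor `h`, and the
image of `∗` is the required point, because `μ z ≤ l z ≤ γ (h z) (h ∗)` and `γ (h z) z = 1`.
-/

universe u v

/-- The `γ`-saturation of `μ`: for a Q-category `γ`, the least function `l ≥ μ` with
`l x * γ x y ≤ l y` for all `x`, `y`. -/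
def saturation {Q : Type v} [CompleteLattice Q] [CommMonoid Q] {Z : Type u}
    (γ : Z → Z → Q) (μ : Z → Q) (z : Z) : Q :=
  ⨆ a, μ a * γ a z

/-- The hom of the one-point extension `Option Z`, in which `none` is the new point and `l` gives
the homs between it and the points of `Z`. -/
def adjoinHom {Q : Type v} [CommMonoid Q] {Z : Type u}
    (γ : Z → Z → Q) (l : Z → Q) : Option Z → Option Z → Q
  | some x, some y => γ x y
  | some x, none => l x
  | none, some y => l y
  | none, none => 1

theorem le_saturation {Q : Type v} [CompleteLattice Q] [CommMonoid Q] {Z : Type u}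
    (γ : Z → Z → Q) (hγ1 : ∀ z, γ z z = 1) (μ : Z → Q) (z : Z) :
    μ z ≤ saturation γ μ z :=
  le_iSup_of_le z (by rw [hγ1, mul_one])

theorem saturation_mul_hom_le {Q : Type v} [CompleteLattice Q] [CommMonoid Q] [IsQuantale Q]
    {Z : Type u} (γ : Z → Z → Q) (hγtrans : ∀ x y z, γ y z * γ x y ≤ γ x z)
    (μ : Z → Q) (x y : Z) : saturation γ μ x * γ x y ≤ saturation γ μ y := by
  unfold saturation
  rw [Quantale.iSup_mul_distrib]
  refine iSup_le fun a => le_iSup_of_le a ?_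
  rw [mul_assoc, mul_comm (γ a x)]
  exact mul_le_mul_right (hγtrans a x y) _

theorem saturation_mul_saturation_le {Q : Type v} [CompleteLattice Q] [CommMonoid Q]
    [IsQuantale Q] {Z : Type u} (γ : Z → Z → Q) (hγsym : ∀ z z', γ z z' = γ z' z)
    (hγtrans : ∀ x y z, γ y z * γ x y ≤ γ x z)
    (μ : Z → Q) (hμ : ∀ z z', μ z * μ z' ≤ γ z z') (x y : Z) :
    saturation γ μ x * saturation γ μ y ≤ γ x y := by
  unfold saturation
  rw [Quantale.iSup_mul_distrib]
  refine iSup_le fun a => ?_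
  rw [Quantale.mul_iSup_distrib]
  refine iSup_le fun b => ?_
  calc μ a * γ a x * (μ b * γ b y) = γ b y * (μ a * μ b * γ x a) := by
        rw [hγsym a x]; ac_rfl
    _ ≤ γ b y * (γ a b * γ x a) := mul_le_mul_right (mul_le_mul_left (hμ a b) _) _
    _ ≤ γ b y * γ x b := mul_le_mul_right (hγtrans x a b) _
    _ ≤ γ x y := hγtrans x b y

/-- Every injective symmetric Q-category is hypercomplete. -/
theorem injective_is_hypercomplete
    {Q : Type v} [CompleteLattice Q] [CommMonoid Q] [IsQuantale Q]
    (hint : (⊤ : Q) = 1)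
    {Z : Type u} (γ : Z → Z → Q)
    (hγ1 : ∀ z, γ z z = 1)
    (hγsym : ∀ z z', γ z z' = γ z' z)
    (hγtrans : ∀ x y z, γ y z * γ x y ≤ γ x z)
    (hinj : ∀ (X Y : Type u) (α : X → X → Q) (β : Y → Y → Q),
      (∀ x, α x x = 1) → (∀ x x', α x x' = α x' x) →
      (∀ x y z, α y z * α x y ≤ α x z) →
      (∀ y, β y y = 1) → (∀ y y', β y y' = β y' y) →
      (∀ x y z, β y z * β x y ≤ β x z) →
      ∀ (g : X → Y), (∀ x x', β (g x) (g x') = α x x') →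
      ∀ (f : X → Z), (∀ x x', α x x' ≤ γ (f x) (f x')) →
      ∃ h : Y → Z, (∀ y y', β y y' ≤ γ (h y) (h y')) ∧ ∀ x, γ (h (g x)) (f x) = 1) :
    ∀ μ : Z → Q, (∀ z z', μ z * μ z' ≤ γ z z') → ∃ w, ∀ z, μ z ≤ γ z w := by
  intro μ hμ
  have hlγ := saturation_mul_hom_le γ hγtrans μ
  have hll := saturation_mul_saturation_le γ hγsym hγtrans μ hμ
  have le_one : ∀ q : Q, q ≤ 1 := fun q => hint ▸ le_top
  obtain ⟨h, hh, hid⟩ := hinj Z (Option Z) γ (adjoinHom γ (saturation γ μ)) hγ1 hγsym hγtrans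
    (by rintro (_ | x)
        · rfl
        · exact hγ1 x)
    (by rintro (_ | x) (_ | y)
        · rfl
        · rfl
        · rfl
        · exact hγsym x y)
    (by rintro (_ | x) (_ | y) (_ | z) <;> simp only [adjoinHom, mul_one, one_mul, le_refl]
        · exact le_one _
        · rw [mul_comm]
          exact hlγ y z
        · rw [mul_comm]
          exact hll x z
        · rw [hγsym x y]
          exact hlγ y x
        · exact hγtrans x y z)
    some (fun _ _ => rfl) id (fun _ _ => le_rfl)
  refine ⟨h none, fun z => ?_⟩
  calc μ z ≤ saturation γ μ z := le_saturation γ hγ1 μ z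
    _ ≤ γ (h (some z)) (h none) := hh (some z) none
    _ = γ (h (some z)) (h none) * γ z (h (some z)) := by
        rw [hγsym z, show γ (h (some z)) z = 1 from hid z, mul_one]
    _ ≤ γ z (h none) := hγtrans _ _ _
end

section
/- Let Q be a commutative, integral quantale. If a symmetric Q-category (X,α) is hypercomplete, then X is an absolute retract among symmetric Q-categories: for every symmetric Q-category (Y,β) and every fully faithful Q-functor g : (X,α) → (Y,β), there exists a Q-functor h : (Y,β) → (X,α) with α (h (g x)) x = 1 for all x ∈ X. -/
/-!
The proof follows the Aronszajn–Panitchpakdi extension argument. Call a relation `R ⊆ Y × X`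
nonexpansive if `β y y' ≤ α x x'` whenever `(y, x), (y', x') ∈ R`. The graph `{(g x, x)}` is
nonexpansive because `g` is fully faithful, and by Zorn's lemma it is contained in a maximal
nonexpansive `R`. Hypercompleteness of `X` (`exists_extension_point`) shows that `R` relates every
`y` to some point of `X`, since otherwise it could be enlarged. Any choice function `h` for `R` is
then a Q-functor, and `(g x, h (g x)), (g x, x) ∈ R` gives `1 = β (g x) (g x) ≤ α (h (g x)) x`.
Relations are used instead of partial functions because single-valuedness is never needed.
-/

/-- The one-point extension step: hypercompleteness is applied to the weight
`μ x = ⨆ (y', x') ∈ R, α x x' * β y' y`. -/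
theorem exists_extension_point
    {Q : Type*} [CompleteLattice Q] [CommMonoid Q] [IsQuantale Q]
    {X Y : Type*} (α : X → X → Q)
    (hα1 : ∀ x, α x x = 1)
    (hαsym : ∀ x y, α x y = α y x)
    (hαtrans : ∀ x y z, α y z * α x y ≤ α x z)
    (hXhc : ∀ μ : X → Q, (∀ x x', μ x * μ x' ≤ α x x') → ∃ z, ∀ x, μ x ≤ α x z)
    (β : Y → Y → Q)
    (hβsym : ∀ y y', β y y' = β y' y)
    (hβtrans : ∀ x y z, β y z * β x y ≤ β x z)
    (R : Set (Y × X)) (hR : ∀ p ∈ R, ∀ q ∈ R, β p.1 q.1 ≤ α p.2 q.2) (y : Y) :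
    ∃ z, ∀ p ∈ R, β p.1 y ≤ α p.2 z := by
  obtain ⟨z, hz⟩ := hXhc (fun x => ⨆ p : R, α x p.1.2 * β p.1.1 y) (by
    intro x x'
    simp only [Quantale.iSup_mul_distrib, Quantale.mul_iSup_distrib]
    refine iSup_le fun q => iSup_le fun p => ?_
    have h1 : β p.1.1 y * β q.1.1 y ≤ α p.1.2 q.1.2 := by
      refine le_trans ?_ (hR p.1 p.2 q.1 q.2)
      rw [mul_comm, hβsym q.1.1 y]
      exact hβtrans _ _ _
    calc α x p.1.2 * β p.1.1 y * (α x' q.1.2 * β q.1.1 y)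
        = α x' q.1.2 * ((β p.1.1 y * β q.1.1 y) * α x p.1.2) := by
          ac_rfl
      _ ≤ α x' q.1.2 * (α p.1.2 q.1.2 * α x p.1.2) :=
          mul_le_mul_right (mul_le_mul_left h1 _) _
      _ ≤ α x' q.1.2 * α x q.1.2 := mul_le_mul_right (hαtrans _ _ _) _
      _ = α q.1.2 x' * α x q.1.2 := by rw [hαsym x']
      _ ≤ α x x' := hαtrans _ _ _)
  refine ⟨z, fun p hp => le_trans ?_ (hz p.2)⟩
  have h := le_iSup (fun q : R => α p.2 q.1.2 * β q.1.1 y) ⟨p, hp⟩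
  simpa only [hα1, one_mul] using h

/-- A hypercomplete symmetric Q-category is an absolute retract. -/
theorem hypercomplete_is_absolute_retract
    {Q : Type*} [CompleteLattice Q] [CommMonoid Q] [IsQuantale Q]
    (hint : (⊤ : Q) = 1)
    {X : Type*} (α : X → X → Q)
    (hα1 : ∀ x, α x x = 1)
    (hαsym : ∀ x y, α x y = α y x)
    (hαtrans : ∀ x y z, α y z * α x y ≤ α x z)
    (hXhc : ∀ μ : X → Q, (∀ x x', μ x * μ x' ≤ α x x') → ∃ z, ∀ x, μ x ≤ α x z)
    {Y : Type*} (β : Y → Y → Q)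
    (hβ1 : ∀ y, β y y = 1)
    (hβsym : ∀ y y', β y y' = β y' y)
    (hβtrans : ∀ x y z, β y z * β x y ≤ β x z)
    (g : X → Y) (hg : ∀ x x', β (g x) (g x') = α x x') :
    ∃ h : Y → X, (∀ y y', β y y' ≤ α (h y) (h y')) ∧ ∀ x, α (h (g x)) x = 1 := by
  obtain ⟨R, hgR, hmax⟩ := zorn_subset_nonempty
    {R : Set (Y × X) | ∀ p ∈ R, ∀ q ∈ R, β p.1 q.1 ≤ α p.2 q.2}
    (fun c hc hchain _ => ⟨⋃₀ c, by
      rintro p ⟨s, hs, hps⟩ q ⟨t, ht, hqt⟩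
      rcases hchain.total hs ht with hst | hts
      · exact hc ht p (hst hps) q hqt
      · exact hc hs p hps q (hts hqt), fun s hs => Set.subset_sUnion_of_mem hs⟩)
    (Set.range fun x => (g x, x))
    (by
      rintro _ ⟨x, rfl⟩ _ ⟨x', rfl⟩
      exact (hg x x').le)
  have hR : ∀ p ∈ R, ∀ q ∈ R, β p.1 q.1 ≤ α p.2 q.2 := hmax.prop
  have htotal : ∀ y, ∃ z, (y, z) ∈ R := by
    intro y
    obtain ⟨z, hz⟩ := exists_extension_point α hα1 hαsym hαtrans hXhc β hβsym hβtrans R hR y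
    have hins : ∀ p ∈ insert (y, z) R, ∀ q ∈ insert (y, z) R, β p.1 q.1 ≤ α p.2 q.2 := by
      rintro p (rfl | hp) q (rfl | hq)
      · exact (hβ1 y).trans_le (hα1 z).ge
      · rw [hβsym, hαsym]
        exact hz q hq
      · exact hz p hp
      · exact hR p hp q hq
    exact ⟨z, hmax.le_of_ge hins (Set.subset_insert _ _) (Set.mem_insert _ _)⟩
  choose h hh using htotal
  refine ⟨h, fun y y' => hR _ (hh y) _ (hh y'), fun x => ?_⟩
  refine le_antisymm (hint ▸ le_top) ?_
  have := hR _ (hh (g x)) _ (hgR ⟨x, rfl⟩)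
  rwa [hβ1] at this
end

section
/- Let Q be a commutative, integral quantale and (X,α) a symmetric Q-category. Then the tight span (T X, σ) is itself a symmetric Q-category: for all μ, λ, ν ∈ T X one has σ μ μ = 1, σ μ λ = σ λ μ, and σ λ ν * σ μ λ ≤ σ μ ν. -/
/-!
The reflexivity and transitivity of `tsHom` are formal consequences of the adjunction
`p * q ≤ r ↔ q ≤ qimp p r`. Symmetry uses the fixed-point equation of the tight span: if
`μ y * c ≤ lam y` for all `y`, then `μ y * (lam x * c) ≤ lam y * lam x ≤ α x y` for all `x, y`,
and therefore `lam x * c ≤ ⨅ y, qimp (μ y) (α x y) = μ x`.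
-/

/-- The residuation `p ⇨ r` of a quantale, right adjoint to multiplication:
`p * q ≤ r ↔ q ≤ qimp p r`. -/
def qimp {Q : Type*} [CompleteLattice Q] [Mul Q] (p r : Q) : Q :=
  sSup {q | p * q ≤ r}

/-- The tight span of a symmetric Q-category `(X, α)`. -/
def tightSpan {Q X : Type*} [CompleteLattice Q] [Mul Q] (α : X → X → Q) :
    Set (X → Q) :=
  {μ | ∀ x, μ x = ⨅ y, qimp (μ y) (α x y)}

/-- The hom of the tight span: `σ μ λ = ⨅ x, (μ x ⇨ λ x)`. -/
def tsHom {Q X : Type*} [CompleteLattice Q] [Mul Q] (μ lam : X → Q) : Q :=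
  ⨅ x, qimp (μ x) (lam x)

theorem le_qimp_iff {Q : Type*} [CompleteLattice Q] [CommMonoid Q] [IsQuantale Q] {p q r : Q} :
    q ≤ qimp p r ↔ p * q ≤ r :=
  Quantale.rightMulResiduation_le_iff_mul_le

theorem le_tsHom_iff {Q X : Type*} [CompleteLattice Q] [CommMonoid Q] [IsQuantale Q]
    {μ lam : X → Q} {c : Q} : c ≤ tsHom μ lam ↔ ∀ x, μ x * c ≤ lam x := by
  simp only [tsHom, le_iInf_iff, le_qimp_iff]

/-- One half of the symmetry of `tsHom`; the other half follows by exchanging `μ` and `lam`. -/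
theorem tsHom_le_swap {Q X : Type*} [CompleteLattice Q] [CommMonoid Q] [IsQuantale Q]
    {α : X → X → Q} {μ lam : X → Q} (hμ : μ ∈ tightSpan α) (hlam : lam ∈ tightSpan α) :
    tsHom μ lam ≤ tsHom lam μ := by
  refine le_tsHom_iff.2 fun x => ?_
  rw [hμ x]
  refine le_iInf fun y => le_qimp_iff.2 ?_
  have h1 : μ y * tsHom μ lam ≤ lam y := le_tsHom_iff.1 le_rfl y
  have h2 : lam y * lam x ≤ α x y := le_qimp_iff.1 ((hlam x).le.trans (iInf_le _ y))
  calc μ y * (lam x * tsHom μ lam) = μ y * tsHom μ lam * lam x := by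
        rw [mul_comm (lam x), mul_assoc]
    _ ≤ lam y * lam x := by gcongr
    _ ≤ α x y := h2

/-- the tight span is a symmetric Q-category. -/
theorem tightSpan_symmetric_qcat
    {Q : Type*} [CompleteLattice Q] [CommMonoid Q] [IsQuantale Q]
    (hint : (⊤ : Q) = 1)
    {X : Type*} (α : X → X → Q)
    (hα1 : ∀ x, α x x = 1)
    (hαsym : ∀ x y, α x y = α y x)
    (hαtrans : ∀ x y z, α y z * α x y ≤ α x z)
    (μ lam ν : X → Q)
    (hμ : μ ∈ tightSpan α) (hlam : lam ∈ tightSpan α) (hν : ν ∈ tightSpan α) :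
    tsHom μ μ = 1 ∧ tsHom μ lam = tsHom lam μ ∧
      tsHom lam ν * tsHom μ lam ≤ tsHom μ ν := by
  refine ⟨?_, le_antisymm (tsHom_le_swap hμ hlam) (tsHom_le_swap hlam hμ), ?_⟩
  · refine le_antisymm (hint ▸ le_top) (le_tsHom_iff.2 fun x => ?_)
    rw [mul_one]
  · refine le_tsHom_iff.2 fun x => ?_
    have h1 : μ x * tsHom μ lam ≤ lam x := le_tsHom_iff.1 le_rfl x
    have h2 : lam x * tsHom lam ν ≤ ν x := le_tsHom_iff.1 le_rfl x
    calc μ x * (tsHom lam ν * tsHom μ lam) = μ x * tsHom μ lam * tsHom lam ν := by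
          rw [mul_comm (tsHom lam ν), mul_assoc]
      _ ≤ lam x * tsHom lam ν := by gcongr
      _ ≤ ν x := h2
end

section
/- Let Q be a commutative, integral quantale and (X,α) a symmetric Q-category. The Yoneda map y : X → (X → Q), y x := fun x' => α x' x, lands in the tight span T X (i.e., y x ∈ T X for every x ∈ X) and is fully faithful: σ (y x) (y x') = α x x' for all x, x' ∈ X. -/
theorem qimp_one_le {Q : Type*} [CompleteLattice Q] [CommMonoid Q] (r : Q) : qimp 1 r ≤ r :=
  sSup_le fun q hq => by simpa using hq

theorem le_qimp {Q : Type*} [CompleteLattice Q] [Mul Q] {p q r : Q} (h : p * q ≤ r) :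
    q ≤ qimp p r :=
  le_sSup h

/-- the Yoneda map lands in the tight span and is fully faithful. -/
theorem yoneda_mem_tightSpan_and_fullyFaithful
    {Q : Type*} [CompleteLattice Q] [CommMonoid Q] [IsQuantale Q]
    (hint : (⊤ : Q) = 1)
    {X : Type*} (α : X → X → Q)
    (hα1 : ∀ x, α x x = 1)
    (hαsym : ∀ x y, α x y = α y x)
    (hαtrans : ∀ x y z, α y z * α x y ≤ α x z) :
    (∀ x : X, (fun x' => α x' x) ∈ tightSpan α) ∧
      (∀ x x' : X, tsHom (fun y => α y x) (fun y => α y x') = α x x') := by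
  constructor
  · intro x x'
    apply le_antisymm
    · refine le_iInf fun y => le_qimp ?_
      simpa only [hαsym y x] using hαtrans x' x y
    · refine (iInf_le _ x).trans ?_
      simpa only [hα1] using qimp_one_le (α x' x)
  · intro x x'
    apply le_antisymm
    · refine (iInf_le _ x).trans ?_
      simpa only [hα1] using qimp_one_le (α x x')
    · refine le_iInf fun y => le_qimp ?_
      simpa only [mul_comm] using hαtrans y x x'
end

section
/- If a partial metric space (Z,γ) is injective in the category ParMet (for all partial metric spaces (X,α) and (Y,β), every isometric map g : (X,α) → (Y,β) and every non-expansive map f : (X,α) → (Z,γ) admit a non-expansive map h : (Y,β) → (Z,γ) with γ (h (g x)) (f x) = γ (f x) (f x) for all x), then (Z,γ) is hyperconvex. -/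
/-!
The space `Z` is re-metrized rather than shrinking `μ` to a minimal function: keep the
self-distances, and put every two distinct points at distance `μ x + μ y - r`. The hypotheses on
`μ` ensure that this is a partial metric dominating `γ`, so the identity from the
re-metrized space to `(Z, γ)` is non-expansive, and that it extends to a partial metric on
`Option Z` whose new point has self-distance `r` and distance `μ x` to each `x`. Injectivity
extends the identity to the new point, whose image is the required `z`.

Only finite `r` needs this; for `r = ∞` all `μ x` are infinite and it suffices that `Z` is
nonempty, which is injectivity along the empty map into a point. For finite `r` one writes
`μ x = a x + r` to avoid truncated subtraction, so that `μ x + μ y - r` is `a x + a y + r`.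
-/

open scoped ENNReal

universe u

open Classical in
/-- The partial metric on `Z` with the self-distances of `γ`, and distance `a x + a y + r`
between distinct points. -/
noncomputable def starDist {Z : Type u} (γ : Z → Z → ℝ≥0∞) (a : Z → ℝ≥0∞) (r : ℝ≥0∞)
    (x y : Z) : ℝ≥0∞ :=
  if x = y then γ x x else a x + a y + r

/-- The extension of `starDist` to `Option Z`: the new point `none` has self-distance `r` and
distance `a x + r` to `x`. -/
noncomputable def coneDist {Z : Type u} (γ : Z → Z → ℝ≥0∞) (a : Z → ℝ≥0∞) (r : ℝ≥0∞) :
    Option Z → Option Z → ℝ≥0∞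
  | some x, some y => starDist γ a r x y
  | some x, none => a x + r
  | none, some y => a y + r
  | none, none => r

section
variable {Z : Type u} {γ : Z → Z → ℝ≥0∞} {a : Z → ℝ≥0∞} {r : ℝ≥0∞}

lemma starDist_self (x : Z) : starDist γ a r x x = γ x x := by simp [starDist]

lemma starDist_of_ne {x y : Z} (h : x ≠ y) : starDist γ a r x y = a x + a y + r := by
  simp [starDist, h]

lemma starDist_symm (x y : Z) : starDist γ a r x y = starDist γ a r y x := by
  by_cases h : x = y
  · rw [h]
  · rw [starDist_of_ne h, starDist_of_ne (Ne.symm h), add_comm (a x)]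

lemma le_starDist (hd : ∀ x y, γ x y ≤ a x + a y + r) (x y : Z) :
    γ x y ≤ starDist γ a r x y := by
  by_cases h : x = y
  · rw [h, starDist_self]
  · rw [starDist_of_ne h]; exact hd x y

lemma starDist_le (hd : ∀ x y, γ x y ≤ a x + a y + r) (x y : Z) :
    starDist γ a r x y ≤ a x + a y + r := by
  by_cases h : x = y
  · rw [← h, starDist_self]; exact hd x x
  · rw [starDist_of_ne h]

lemma starDist_small (hγ1 : ∀ x y, γ x x ⊔ γ y y ≤ γ x y)
    (hd : ∀ x y, γ x y ≤ a x + a y + r) (x y : Z) :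
    starDist γ a r x x ⊔ starDist γ a r y y ≤ starDist γ a r x y := by
  rw [starDist_self, starDist_self]
  exact (hγ1 x y).trans (le_starDist hd x y)

lemma starDist_tri (hd : ∀ x y, γ x y ≤ a x + a y + r) (x y z : Z) :
    starDist γ a r x z + starDist γ a r y y ≤ starDist γ a r x y + starDist γ a r y z := by
  by_cases hxy : x = y
  · subst hxy; rw [add_comm]
  by_cases hyz : y = z
  · subst hyz; exact le_rfl
  rw [starDist_self, starDist_of_ne hxy, starDist_of_ne hyz]
  calc starDist γ a r x z + γ y y ≤ (a x + a z + r) + (a y + a y + r) :=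
        add_le_add (starDist_le hd x z) (hd y y)
    _ = _ := by ring

lemma coneDist_symm (p q : Option Z) : coneDist γ a r p q = coneDist γ a r q p := by
  cases p <;> cases q <;> simp [coneDist, starDist_symm]

lemma coneDist_small (hγ1 : ∀ x y, γ x x ⊔ γ y y ≤ γ x y) (hμ : ∀ x, γ x x ≤ a x + r)
    (hd : ∀ x y, γ x y ≤ a x + a y + r) (p q : Option Z) :
    coneDist γ a r p p ⊔ coneDist γ a r q q ≤ coneDist γ a r p q := by
  rcases p with _ | x <;> rcases q with _ | y
  · simp [coneDist]
  · simpa [coneDist, starDist_self] using hμ y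
  · simpa [coneDist, starDist_self] using hμ x
  · exact starDist_small hγ1 hd x y

lemma coneDist_tri (hd : ∀ x y, γ x y ≤ a x + a y + r) (p q s : Option Z) :
    coneDist γ a r p s + coneDist γ a r q q ≤ coneDist γ a r p q + coneDist γ a r q s := by
  -- The case where exactly one end is the new point and the middle point is old.
  have key : ∀ x y, a x + r + γ y y ≤ starDist γ a r x y + (a y + r) := by
    intro x y
    by_cases h : x = y
    · rw [h, starDist_self, add_comm]
    · rw [starDist_of_ne h]
      calc a x + r + γ y y ≤ a x + r + (a y + a y + r) := by gcongr; exact hd y y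
        _ = _ := by ring
  rcases p with _ | x <;> rcases q with _ | y <;> rcases s with _ | z
  · simp [coneDist]
  · simp [coneDist, add_comm]
  · simp only [coneDist, starDist_self]
    calc r + γ y y ≤ r + (a y + a y + r) := by gcongr; exact hd y y
      _ = _ := by ring
  · simp only [coneDist, starDist_self]
    rw [starDist_symm y z, add_comm (a y + r)]
    exact key z y
  · simp [coneDist]
  · simp only [coneDist]
    calc starDist γ a r x z + r ≤ a x + a z + r + r := by gcongr; exact starDist_le hd x z
      _ = _ := by ring
  · simp only [coneDist, starDist_self]
    exact key x y
  · exact starDist_tri hd x y z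

end

/-- every injective partial metric space is hyperconvex. -/
theorem injective_parMet_is_hyperconvex
    {Z : Type u} (γ : Z → Z → ℝ≥0∞)
    (hγ1 : ∀ x y, γ x x ⊔ γ y y ≤ γ x y)
    (hγsym : ∀ x y, γ x y = γ y x)
    (hγtri : ∀ x y z, γ x z + γ y y ≤ γ x y + γ y z)
    (hinj : ∀ (X Y : Type u) (α : X → X → ℝ≥0∞) (β : Y → Y → ℝ≥0∞),
      (∀ x y, α x x ⊔ α y y ≤ α x y) → (∀ x y, α x y = α y x) →
      (∀ x y z, α x z + α y y ≤ α x y + α y z) →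
      (∀ x y, β x x ⊔ β y y ≤ β x y) → (∀ x y, β x y = β y x) →
      (∀ x y z, β x z + β y y ≤ β x y + β y z) →
      ∀ g : X → Y, (∀ x x', β (g x) (g x') = α x x') →
      ∀ f : X → Z, (∀ x, γ (f x) (f x) = α x x) → (∀ x x', γ (f x) (f x') ≤ α x x') →
      ∃ h : Y → Z, (∀ y, γ (h y) (h y) = β y y) ∧
        (∀ y y', γ (h y) (h y') ≤ β y y') ∧
        (∀ x, γ (h (g x)) (f x) = γ (f x) (f x))) :
    ∀ (r : ℝ≥0∞) (μ : Z → ℝ≥0∞),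
      (∀ x, r ≤ μ x) → (∀ x, γ x x ≤ μ x) →
      (∀ x y, γ x y + r ≤ μ x + μ y) →
      ∃ z, ∀ x, γ x z ≤ μ x := by
  intro r μ hr hμ hd
  by_cases hrt : r = ⊤
  · obtain ⟨h, -⟩ := hinj PEmpty PUnit (fun _ _ => 0) (fun _ _ => 0) (by simp) (by simp)
      (by simp) (by simp) (by simp) (by simp) PEmpty.elim (fun x => x.elim) PEmpty.elim
      (fun x => x.elim) (fun x => x.elim)
    refine ⟨h PUnit.unit, fun x => ?_⟩
    have : μ x = ⊤ := top_le_iff.1 (hrt ▸ hr x)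
    simp [this]
  obtain ⟨a, ha⟩ : ∃ a : Z → ℝ≥0∞, ∀ x, μ x = a x + r :=
    ⟨fun x => μ x - r, fun x => (tsub_add_cancel_of_le (hr x)).symm⟩
  have hd' : ∀ x y, γ x y ≤ a x + a y + r := by
    intro x y
    refine (ENNReal.add_le_add_iff_right hrt).1 ((hd x y).trans_eq ?_)
    rw [ha, ha]; ring
  have hμ' : ∀ x, γ x x ≤ a x + r := fun x => ha x ▸ hμ x
  obtain ⟨h, h1, h2, h3⟩ := hinj Z (Option Z) (starDist γ a r) (coneDist γ a r)
    (starDist_small hγ1 hd') starDist_symm (starDist_tri hd')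
    (coneDist_small hγ1 hμ' hd') coneDist_symm (coneDist_tri hd')
    some (fun _ _ => rfl) id (fun x => (starDist_self x).symm) (le_starDist hd')
  refine ⟨h none, fun x => ?_⟩
  by_cases hx : γ x x = ⊤
  · exact le_top.trans (hx ▸ hμ x)
  -- `h (some x)` is at distance `γ x x` from `x` and has the same self-distance, so the
  -- triangle inequality through it transfers the bound to `x`.
  have hs : γ (h (some x)) (h (some x)) = γ x x := (h1 (some x)).trans (starDist_self x)
  have ht := hγtri x (h (some x)) (h none)
  rw [hs, hγsym x (h (some x)), show γ (h (some x)) x = γ x x from h3 x, add_comm] at ht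
  have hb := (ENNReal.add_le_add_iff_left hx).1 ht
  rw [ha]
  exact hb.trans (h2 (some x) none)
end

section
/- Let (X,α) be a partial metric space. Then its tight span (T(X,α), σ) is again a partial metric space (σ satisfies σ p p ⊔ σ q q ≤ σ p q, σ p q = σ q p, and σ p u + σ q q ≤ σ p q + σ q u for all p, q, u ∈ T(X,α)), and the Yoneda map x ↦ (α x x, fun y => α y x) lands in T(X,α) and is isometric: σ (y x) (y x') = α x x' for all x, x' ∈ X. -/
/-!
Every inequality `a - b ≤ c` in `ℝ≥0∞` is the subtraction-free `a ≤ c + b`, so a point `(r, μ)` of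
the tight span satisfies `α x y + r ≤ μ x + μ y`, and
for `p = (r, μ)` and `q = (s, λ)` the value `σ p q` is the least `S ≥ r, s` with
`λ x + r ≤ S + μ x` for all `x`. In particular `σ p p = r`.

Symmetry: bounding `λ x` through its defining supremum, the relevant term `α x y + s - λ y` is
controlled by adding `α x y + r ≤ μ x + μ y` to `μ y + s ≤ σ q p + λ y` and cancelling `λ y`.
The triangle inequality is likewise the sum of two such bounds with the middle value cancelled.
For the Yoneda map, upper bounds are the triangle inequality of `α`, and lower bounds come from the
term of the supremum indexed by the represented point. Cancellation fails at `∞`, so infinite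
values are treated separately.
-/

open scoped ENNReal

/-- The tight span of a partial metric space `(X, α)`: pairs `(r, μ)` with
`α x x ≤ μ x` and `μ x = r ⊔ α x x ⊔ ⨆ y, (α x y + r - μ y)` for all `x`. -/
def pmTightSpan {X : Type*} (α : X → X → ℝ≥0∞) : Set (ℝ≥0∞ × (X → ℝ≥0∞)) :=
  {p | ∀ x, α x x ≤ p.2 x ∧ p.2 x = p.1 ⊔ α x x ⊔ ⨆ y, (α x y + p.1 - p.2 y)}

/-- The partial metric on the tight span. -/
noncomputable def pmSigma {X : Type*} (p q : ℝ≥0∞ × (X → ℝ≥0∞)) : ℝ≥0∞ :=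
  p.1 ⊔ q.1 ⊔ ⨆ x, (q.2 x + p.1 - p.2 x)

/-- The Yoneda map of a partial metric space. -/
def pmYoneda {X : Type*} (α : X → X → ℝ≥0∞) (x : X) : ℝ≥0∞ × (X → ℝ≥0∞) :=
  (α x x, fun y => α y x)

/-- Cancellation of `b` for truncated subtraction. The hypothesis `c ≤ d` covers the cases where
`a - b = 0`, including `b = ∞`. -/
lemma tsub_add_le_of_le {a b c d : ℝ≥0∞} (hcd : c ≤ d) (h : a + c ≤ d + b) :
    a - b + c ≤ d := by
  rcases eq_or_ne b ∞ with rfl | hb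
  · simpa using hcd
  rcases le_total a b with hab | hab
  · simpa [tsub_eq_zero_of_le hab] using hcd
  · refine (ENNReal.add_le_add_iff_right hb).1 ?_
    rwa [add_right_comm, tsub_add_cancel_of_le hab]

section Sigma

variable {X : Type*} {α : X → X → ℝ≥0∞} {p q u : ℝ≥0∞ × (X → ℝ≥0∞)}

lemma fst_le_of_mem_pmTightSpan (hp : p ∈ pmTightSpan α) (x : X) : p.1 ≤ p.2 x := by
  rw [(hp x).2]
  exact le_sup_left.trans le_sup_left

lemma add_le_of_mem_pmTightSpan (hp : p ∈ pmTightSpan α) (x y : X) :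
    α x y + p.1 ≤ p.2 x + p.2 y := by
  rw [← tsub_le_iff_right]
  conv_rhs => rw [(hp x).2]
  exact (le_iSup (fun y => α x y + p.1 - p.2 y) y).trans le_sup_right

lemma fst_le_pmSigma_left : p.1 ≤ pmSigma p q := le_sup_left.trans le_sup_left

lemma fst_le_pmSigma_right : q.1 ≤ pmSigma p q := le_sup_right.trans le_sup_left

lemma snd_add_fst_le_pmSigma (p q : ℝ≥0∞ × (X → ℝ≥0∞)) (x : X) :
    q.2 x + p.1 ≤ pmSigma p q + p.2 x := by
  rw [← tsub_le_iff_right]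
  exact (le_iSup (fun x => q.2 x + p.1 - p.2 x) x).trans le_sup_right

lemma pmSigma_self (p : ℝ≥0∞ × (X → ℝ≥0∞)) : pmSigma p p = p.1 := by
  refine le_antisymm (sup_le (sup_le le_rfl le_rfl) (iSup_le fun x => ?_)) fst_le_pmSigma_left
  rw [tsub_le_iff_right, add_comm]

lemma pmSigma_le_swap (hp : p ∈ pmTightSpan α) (hq : q ∈ pmTightSpan α) :
    pmSigma p q ≤ pmSigma q p := by
  refine sup_le (sup_le fst_le_pmSigma_right fst_le_pmSigma_left) (iSup_le fun x => ?_)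
  have hr : p.1 ≤ pmSigma q p := fst_le_pmSigma_right
  rw [tsub_le_iff_right, (hq x).2, max_add, max_add]
  refine sup_le (sup_le ?_ ?_) ?_
  · exact add_le_add fst_le_pmSigma_left (fst_le_of_mem_pmTightSpan hp x)
  · rw [add_comm]
    exact add_le_add hr (hp x).1
  · have : Nonempty X := ⟨x⟩
    rw [ENNReal.iSup_add]
    refine iSup_le fun y => tsub_add_le_of_le (hr.trans le_self_add) ?_
    calc α x y + q.1 + p.1 = α x y + p.1 + q.1 := add_right_comm _ _ _
      _ ≤ p.2 x + p.2 y + q.1 := add_le_add_left (add_le_of_mem_pmTightSpan hp x y) _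
      _ = p.2 x + (p.2 y + q.1) := add_assoc _ _ _
      _ ≤ p.2 x + (pmSigma q p + q.2 y) := add_le_add_right (snd_add_fst_le_pmSigma q p y) _
      _ = pmSigma q p + p.2 x + q.2 y := by ring

/-- The triangle inequality for `pmSigma`, with `pmSigma q q` replaced by its value `q.1`; it holds
for arbitrary pairs, not only for points of the tight span. -/
lemma pmSigma_triangle (p q u : ℝ≥0∞ × (X → ℝ≥0∞)) :
    pmSigma p u + q.1 ≤ pmSigma p q + pmSigma q u := by
  have hpq : q.1 ≤ pmSigma p q := fst_le_pmSigma_right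
  conv_lhs => rw [pmSigma, max_add, max_add]
  refine sup_le (sup_le ?_ ?_) ?_
  · exact add_le_add fst_le_pmSigma_left fst_le_pmSigma_left
  · rw [add_comm]
    exact add_le_add hpq fst_le_pmSigma_right
  · rcases isEmpty_or_nonempty X with _ | _
    · simpa using hpq.trans le_self_add
    rw [ENNReal.iSup_add]
    refine iSup_le fun x => tsub_add_le_of_le (hpq.trans le_self_add) ?_
    have h₁ := snd_add_fst_le_pmSigma p q x
    have h₂ := snd_add_fst_le_pmSigma q u x
    rcases eq_or_ne (q.2 x) ∞ with hx | hx
    · -- An infinite middle value forces `pmSigma p q` or `p.2 x` to be infinite.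
      have h : pmSigma p q + p.2 x = ∞ := by simpa [hx] using h₁
      rw [add_right_comm (pmSigma p q), h, top_add]
      exact le_top
    · refine (ENNReal.add_le_add_iff_right hx).1 ?_
      calc u.2 x + p.1 + q.1 + q.2 x = (q.2 x + p.1) + (u.2 x + q.1) := by ring
        _ ≤ (pmSigma p q + p.2 x) + (pmSigma q u + q.2 x) := add_le_add h₁ h₂
        _ = pmSigma p q + pmSigma q u + p.2 x + q.2 x := by ring

end Sigma

/-- the tight span of a partial metric space is a partial metric
space, and the Yoneda map is an isometric embedding into it. -/
theorem pmTightSpan_partialMetric_and_yoneda_isometric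
    {X : Type*} (α : X → X → ℝ≥0∞)
    (hα1 : ∀ x y, α x x ⊔ α y y ≤ α x y)
    (hαsym : ∀ x y, α x y = α y x)
    (hαtri : ∀ x y z, α x z + α y y ≤ α x y + α y z) :
    (∀ p ∈ pmTightSpan α, ∀ q ∈ pmTightSpan α, ∀ u ∈ pmTightSpan α,
      pmSigma p p ⊔ pmSigma q q ≤ pmSigma p q ∧
      pmSigma p q = pmSigma q p ∧
      pmSigma p u + pmSigma q q ≤ pmSigma p q + pmSigma q u) ∧
    (∀ x : X, pmYoneda α x ∈ pmTightSpan α) ∧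
    (∀ x x' : X, pmSigma (pmYoneda α x) (pmYoneda α x') = α x x') := by
  refine ⟨fun p hp q hq u _ => ⟨?_, ?_, ?_⟩, fun x y => ⟨?_, ?_⟩, fun x x' => ?_⟩
  · rw [pmSigma_self, pmSigma_self]
    exact le_sup_left
  · exact le_antisymm (pmSigma_le_swap hp hq) (pmSigma_le_swap hq hp)
  · rw [pmSigma_self]
    exact pmSigma_triangle p q u
  · exact le_sup_left.trans (hα1 y x)
  · simp only [pmYoneda]
    refine le_antisymm ?_ (sup_le (sup_le ?_ ?_) (iSup_le fun z => ?_))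
    · rcases eq_or_ne (α x x) ∞ with h | h
      · simp [h]
      · refine le_trans ?_ ((le_iSup (fun z => α y z + α x x - α z x) x).trans le_sup_right)
        exact (ENNReal.add_sub_cancel_right h).ge
    · exact le_sup_right.trans (hα1 y x)
    · exact le_sup_left.trans (hα1 y x)
    · rw [tsub_le_iff_right, hαsym z x]
      exact hαtri y x z
  · simp only [pmSigma, pmYoneda]
    refine le_antisymm (sup_le (hα1 x x') (iSup_le fun z => ?_)) ?_
    · rw [tsub_le_iff_right, add_comm (α x x')]
      exact hαtri z x x'
    · rcases eq_or_ne (α x x) ∞ with h | h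
      · simp [h]
      · refine le_trans ?_ ((le_iSup (fun z => α z x' + α x x - α z x) x).trans le_sup_right)
        exact (ENNReal.add_sub_cancel_right h).ge
end

section
/- Let f : (X,α) → (Y,β) be an isometric map between partial metric spaces. Then f is essential in ParMet if and only if f is dense, i.e., β y y' = β y y ⊔ β y' y' ⊔ ⨆ x, (β (f x) y' + β y y − β (f x) y) for all y, y' ∈ Y, where − denotes truncated subtraction on ℝ≥0∞. -/
/-!
Density implies essentiality: if `g` is non-expansive and `g ∘ f` is isometric, the triangle inequality
in `Z` bounds each term of the density formula by the distance in `Z`. This is used first for the pairs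
`(y, f x)`, giving `γ (g y) (g (f x)) = β y (f x)`, and then for arbitrary pairs.

Essentiality implies density: the right-hand side `c` of the density formula at `(p, q)` is always at
most `β p q`. For the converse, `Y` is given the shortest-path partial metric `shortcut` obtained by
adding an edge of length `c` between `p` and `q`. The size of `c` ensures that self-distances and the
distances between points of `f X` do not change, so the identity of `Y` is a non-expansive map to the
new space that is isometric on `f X`. Essentiality then says that no distance has changed, and so
`β p q ≤ c`.
-/

open scoped ENNReal

universe u

/-- The distance `β` after adding a two-way edge of length `c` between two points `p` and `q`, where
`u y` and `v y` are the excess distances `β y p - β p p` and `β y q - β q q`. -/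
noncomputable def shortcut {Y : Type u} (β : Y → Y → ℝ≥0∞) (u v : Y → ℝ≥0∞) (c : ℝ≥0∞)
    (y y' : Y) : ℝ≥0∞ :=
  min (β y y') (min (u y + v y' + c) (v y + u y' + c))

lemma shortcut_cases {Y : Type u} (β : Y → Y → ℝ≥0∞) (u v : Y → ℝ≥0∞) (c : ℝ≥0∞) (y y' : Y) :
    shortcut β u v c y y' = β y y' ∨ shortcut β u v c y y' = u y + v y' + c ∨
      shortcut β u v c y y' = v y + u y' + c := by
  unfold shortcut
  rcases min_choice (β y y') (min (u y + v y' + c) (v y + u y' + c)) with h | h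
  · exact Or.inl h
  · rw [h]
    exact Or.inr (min_choice _ _)

lemma shortcut_le {Y : Type u} (β : Y → Y → ℝ≥0∞) (u v : Y → ℝ≥0∞) (c : ℝ≥0∞) (y y' : Y) :
    shortcut β u v c y y' ≤ β y y' ∧ shortcut β u v c y y' ≤ u y + v y' + c ∧
      shortcut β u v c y y' ≤ v y + u y' + c :=
  ⟨min_le_left _ _, (min_le_right _ _).trans (min_le_left _ _),
    (min_le_right _ _).trans (min_le_right _ _)⟩

/-- The triangle inequality for `shortcut`. A path using the new edge twice is never shorter than one
using it at most once, because `c` dominates both self-distances `a = β p p` and `b = β q q`. -/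
lemma shortcut_triangle {Y : Type u} {β : Y → Y → ℝ≥0∞} {u v : Y → ℝ≥0∞} {a b c : ℝ≥0∞}
    (hsym : ∀ x y, β x y = β y x) (htri : ∀ x y z, β x z + β y y ≤ β x y + β y z)
    (hac : a ≤ c) (hbc : b ≤ c)
    (hu : ∀ y y', u y + β y' y' ≤ β y y' + u y') (hv : ∀ y y', v y + β y' y' ≤ β y y' + v y')
    (hua : ∀ y y', β y y' ≤ u y + u y' + a) (hvb : ∀ y y', β y y' ≤ v y + v y' + b)
    (huc : ∀ y, β y y ≤ u y + c) (hvc : ∀ y, β y y ≤ v y + c) (x y z : Y) :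
    shortcut β u v c x z + β y y ≤ shortcut β u v c x y + shortcut β u v c y z := by
  obtain ⟨h1, h2, h3⟩ := shortcut_le β u v c x z
  rcases shortcut_cases β u v c x y with e | e | e <;>
    rcases shortcut_cases β u v c y z with e' | e' | e' <;> rw [e, e']
  · exact (add_le_add_left h1 _).trans (htri x y z)
  · calc _ ≤ (u x + v z + c) + β y y := by gcongr
      _ = (u x + β y y) + (v z + c) := by ring
      _ ≤ (β x y + u y) + (v z + c) := add_le_add_left (hu x y) _
      _ = _ := by ring
  · calc _ ≤ (v x + u z + c) + β y y := by gcongr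
      _ = (v x + β y y) + (u z + c) := by ring
      _ ≤ (β x y + v y) + (u z + c) := add_le_add_left (hv x y) _
      _ = _ := by ring
  · calc _ ≤ (u x + v z + c) + β y y := by gcongr
      _ = (v z + β y y) + (u x + c) := by ring
      _ ≤ (β z y + v y) + (u x + c) := add_le_add_left (hv z y) _
      _ = _ := by rw [hsym z y]; ring
  · calc _ ≤ (u x + v z + c) + (v y + c) := add_le_add h2 (hvc y)
      _ ≤ (u x + v z + c) + (v y + c) + u y := le_self_add
      _ = _ := by ring
  · calc _ ≤ (u x + u z + a) + (v y + c) := add_le_add (h1.trans (hua x z)) (hvc y)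
      _ ≤ (u x + u z + c) + (v y + c) := by gcongr
      _ ≤ (u x + u z + c) + (v y + c) + v y := le_self_add
      _ = _ := by ring
  · calc _ ≤ (v x + u z + c) + β y y := by gcongr
      _ = (u z + β y y) + (v x + c) := by ring
      _ ≤ (β z y + u y) + (v x + c) := add_le_add_left (hu z y) _
      _ = _ := by rw [hsym z y]; ring
  · calc _ ≤ (v x + v z + b) + (u y + c) := add_le_add (h1.trans (hvb x z)) (huc y)
      _ ≤ (v x + v z + c) + (u y + c) := by gcongr
      _ ≤ (v x + v z + c) + (u y + c) + u y := le_self_add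
      _ = _ := by ring
  · calc _ ≤ (v x + u z + c) + (u y + c) := add_le_add h3 (huc y)
      _ ≤ (v x + u z + c) + (u y + c) + v y := le_self_add
      _ = _ := by ring

/-- Basic estimates for the excess distance `β y p - β p p`. -/
lemma excess_props {Y : Type u} {β : Y → Y → ℝ≥0∞} (h1 : ∀ x y, β x x ⊔ β y y ≤ β x y)
    (hsym : ∀ x y, β x y = β y x) (htri : ∀ x y z, β x z + β y y ≤ β x y + β y z)
    (p : Y) (hp : β p p ≠ ∞) :
    ∃ u : Y → ℝ≥0∞, (∀ y, u y + β p p = β y p) ∧ u p = 0 ∧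
      (∀ y y', u y + β y' y' ≤ β y y' + u y') ∧ (∀ y y', β y y' ≤ u y + u y' + β p p) := by
  have e : ∀ y, (β y p - β p p) + β p p = β y p := fun y =>
    tsub_add_cancel_of_le (le_sup_right.trans (h1 y p))
  refine ⟨fun y => β y p - β p p, e, by simp, fun y y' => ?_, fun y y' => ?_⟩
  · rw [← ENNReal.add_le_add_iff_right hp, add_right_comm, e, add_assoc, e]
    exact htri y y' p
  · rw [← ENNReal.add_le_add_iff_right hp]
    calc _ ≤ β y p + β p y' := htri y p y'
      _ = (β y p - β p p + β p p) + (β y' p - β p p + β p p) := by rw [e, e, hsym p y']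
      _ = _ := by ring

/-- an isometric map between partial metric spaces is essential in
ParMet if and only if it is dense. -/
theorem parMet_essential_iff_dense
    {X Y : Type u} (α : X → X → ℝ≥0∞) (β : Y → Y → ℝ≥0∞)
    (hα1 : ∀ x y, α x x ⊔ α y y ≤ α x y)
    (hαsym : ∀ x y, α x y = α y x)
    (hαtri : ∀ x y z, α x z + α y y ≤ α x y + α y z)
    (hβ1 : ∀ x y, β x x ⊔ β y y ≤ β x y)
    (hβsym : ∀ x y, β x y = β y x)
    (hβtri : ∀ x y z, β x z + β y y ≤ β x y + β y z)
    (f : X → Y)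
    (hff : ∀ x x', β (f x) (f x') = α x x') :
    (∀ (Z : Type u) (γ : Z → Z → ℝ≥0∞),
      (∀ x y, γ x x ⊔ γ y y ≤ γ x y) → (∀ x y, γ x y = γ y x) →
      (∀ x y z, γ x z + γ y y ≤ γ x y + γ y z) →
      ∀ g : Y → Z, (∀ y, γ (g y) (g y) = β y y) →
      (∀ y y', γ (g y) (g y') ≤ β y y') →
      (∀ x x', γ (g (f x)) (g (f x')) = α x x') →
      (∀ y y', γ (g y) (g y') = β y y'))
    ↔ (∀ y y', β y y' =
        β y y ⊔ β y' y' ⊔ ⨆ x, (β (f x) y' + β y y - β (f x) y)) := by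
  have hlow : ∀ y y', β y y ⊔ β y' y' ⊔ ⨆ x, (β (f x) y' + β y y - β (f x) y) ≤ β y y' := by
    intro y y'
    refine sup_le (hβ1 y y') (iSup_le fun x => ?_)
    rw [tsub_le_iff_left]
    exact hβtri (f x) y y'
  constructor
  · intro hess p q
    refine le_antisymm ?_ (hlow p q)
    set c := β p p ⊔ β q q ⊔ ⨆ x, (β (f x) q + β p p - β (f x) p) with hc
    have hac : β p p ≤ c := le_sup_left.trans le_sup_left
    have hbc : β q q ≤ c := le_sup_right.trans le_sup_left
    have hxc : ∀ x, β (f x) q + β p p - β (f x) p ≤ c := fun x =>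
      (le_iSup (fun x => β (f x) q + β p p - β (f x) p) x).trans le_sup_right
    clear_value c
    by_cases hct : c = ∞
    · simp [hct]
    have ha : β p p ≠ ∞ := ne_top_of_le_ne_top hct hac
    have hb : β q q ≠ ∞ := ne_top_of_le_ne_top hct hbc
    obtain ⟨u, hu0, hup, hu, hua⟩ := excess_props hβ1 hβsym hβtri p ha
    obtain ⟨v, hv0, hvq, hv, hvb⟩ := excess_props hβ1 hβsym hβtri q hb
    have huc : ∀ y, β y y ≤ u y + c := fun y =>
      calc β y y ≤ β y p := le_sup_left.trans (hβ1 y p)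
        _ = u y + β p p := (hu0 y).symm
        _ ≤ _ := by gcongr
    have hvc : ∀ y, β y y ≤ v y + c := fun y =>
      calc β y y ≤ β y q := le_sup_left.trans (hβ1 y q)
        _ = v y + β q q := (hv0 y).symm
        _ ≤ _ := by gcongr
    have hself : ∀ y y', β y y ⊔ β y' y' ≤ shortcut β u v c y y' := by
      intro y y'
      refine le_min (hβ1 y y') (le_min (sup_le ?_ ?_) (sup_le ?_ ?_))
      · calc _ ≤ _ := huc y
          _ ≤ u y + c + v y' := le_self_add
          _ = _ := by ring
      · calc _ ≤ _ := hvc y'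
          _ ≤ v y' + c + u y := le_self_add
          _ = _ := by ring
      · calc _ ≤ _ := hvc y
          _ ≤ v y + c + u y' := le_self_add
          _ = _ := by ring
      · calc _ ≤ _ := huc y'
          _ ≤ u y' + c + v y := le_self_add
          _ = _ := by ring
    -- A detour through the new edge does not shorten distances between points of `f X`.
    have hX : ∀ x x', β (f x) (f x') ≤ u (f x) + v (f x') + c := by
      intro x x'
      have h1 : β (f x) q ≤ c + u (f x) := by
        rw [← ENNReal.add_le_add_iff_right ha, add_assoc, hu0, add_comm c]
        exact tsub_le_iff_left.mp (hxc x)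
      rw [← ENNReal.add_le_add_iff_right hb]
      calc _ ≤ β (f x) q + β q (f x') := hβtri _ _ _
        _ ≤ (c + u (f x)) + (v (f x') + β q q) := by
          rw [hv0, hβsym q]
          gcongr
        _ = _ := by ring
    have key := hess Y (shortcut β u v c)
      (fun y y' => (sup_le_sup (shortcut_le β u v c y y).1 (shortcut_le β u v c y' y').1).trans
        (hself y y'))
      (fun y y' => by
        unfold shortcut
        rw [hβsym y y', min_comm (u y + _ + c), add_comm (v y), add_comm (u y)])
      (fun x y z => (add_le_add_right (shortcut_le β u v c y y).1 _).trans
        (shortcut_triangle hβsym hβtri hac hbc hu hv hua hvb huc hvc x y z))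
      id
      (fun y => le_antisymm (shortcut_le β u v c y y).1 (le_sup_left.trans (hself y y)))
      (fun y y' => (shortcut_le β u v c y y').1)
      (fun x x' => by
        rw [← hff]
        refine le_antisymm (shortcut_le β u v c _ _).1 (le_min le_rfl (le_min (hX x x') ?_))
        rw [hβsym, add_comm (v _)]
        exact hX x' x)
      p q
    rw [← key]
    simpa [hup, hvq] using (shortcut_le β u v c p q).2.1
  · intro hd Z γ hγ1 hγsym hγtri g hgself hgle hgf
    have hbase : ∀ y y', β y y ⊔ β y' y' ≤ γ (g y) (g y') := fun y y' => by
      rw [← hgself y, ← hgself y']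
      exact hγ1 _ _
    -- The density formula reduces isometry at `(y, y')` to isometry at all the pairs `(f x, y')`.
    have hstep : ∀ y y', (∀ x, β (f x) y' ≤ γ (g (f x)) (g y')) → γ (g y) (g y') = β y y' := by
      intro y y' h
      refine le_antisymm (hgle y y') ?_
      rw [hd y y']
      refine sup_le (hbase y y') (iSup_le fun x => ?_)
      rw [tsub_le_iff_left]
      calc _ ≤ γ (g (f x)) (g y') + γ (g y) (g y) := add_le_add (h x) (hgself y).ge
        _ ≤ γ (g (f x)) (g y) + γ (g y) (g y') := hγtri _ _ _
        _ ≤ _ := add_le_add_left (hgle _ _) _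
    have hfx : ∀ y x, γ (g y) (g (f x)) = β y (f x) := fun y x =>
      hstep y (f x) fun x' => by rw [hff, hgf]
    exact fun y y' => hstep y y' fun x => by rw [hβsym, hγsym, hfx]
end

section
/- A metric space X is injective in the category Met of metric spaces and non-expansive maps if and only if X is hyperconvex: for every index type ι and families p : ι → X, r : ι → ℝ≥0∞ with edist (p j) (p k) ≤ r j + r k for all j, k, there exists z ∈ X with edist (p j) z ≤ r j for all j. -/
open scoped ENNReal

universe u

/-!
Injective implies hyperconvex: only the indices of finite radius matter. If there are any, the
function `s y = inf_j (d(y, p j) + r j)` is 1-Lipschitz and satisfies `d(x, y) ≤ s x + s y`, i.e. it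
behaves like the distance to an ideal point lying in all the balls. Subtracting `d(x₀, ·)`, this
ideal point lives in the space of bounded continuous functions on `X`, into which `X` embeds
isometrically by `x ↦ d(x, ·) - d(x₀, ·)` (Kuratowski), and its distance to the image of `x` is at
most `s x`. A non-expansive retraction onto `X` sends it to a point of all the balls.

Hyperconvex implies injective: by Zorn's lemma, extend the relation `{(g a, f a)}` to a maximal
non-expansive relation between `B` and `X` (`NonexpansiveRel`). Hyperconvexity allows any such
relation to be extended by a pair over any given point of `B`, so a maximal one is the graph of a
total map.
-/

/-- `S` is the graph of a non-expansive map defined on some subset of `B`; single-valuedness is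
the case of equal first coordinates. -/
def NonexpansiveRel {B X : Type*} [MetricSpace B] [MetricSpace X] (S : Set (B × X)) : Prop :=
  ∀ a ∈ S, ∀ b ∈ S, edist a.2 b.2 ≤ edist a.1 b.1

/-- The function `u - d(x₀, ·)` as a bounded continuous function, where `|u - d(x₀, ·)| ≤ C`. -/
noncomputable def shiftedBCF {X : Type*} [MetricSpace X] (x₀ : X) (u : X → ℝ)
    (hu : LipschitzWith 1 u) (C : ℝ) (hC : ∀ y, |u y - dist x₀ y| ≤ C) :
    BoundedContinuousFunction X ℝ :=
  BoundedContinuousFunction.ofNormedAddCommGroup (fun y => u y - dist x₀ y)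
    (hu.continuous.sub (continuous_const.dist continuous_id)) C hC

/-- An injective metric space contains a point at distance at most `s x` from every `x`, whenever
`s` satisfies the inequalities of a distance function to a point in a metric extension of `X`. -/
lemma exists_point_of_injective {X : Type u} [MetricSpace X]
    (hX : ∀ (A B : Type u) [MetricSpace A] [MetricSpace B]
      (g : A → B) (f : A → X), Isometry g → LipschitzWith 1 f →
      ∃ h : B → X, LipschitzWith 1 h ∧ h ∘ g = f)
    (x₀ : X) (s : X → ℝ) (hs : ∀ x y, s x ≤ s y + dist x y)
    (hd : ∀ x y, dist x y ≤ s x + s y) : ∃ z, ∀ x, dist x z ≤ s x := by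
  have hL : LipschitzWith 1 s := LipschitzWith.of_le_add hs
  let e : X → BoundedContinuousFunction X ℝ := fun x =>
    shiftedBCF x₀ (dist x) (LipschitzWith.dist_right x) (dist x x₀)
      fun y => abs_dist_sub_le x x₀ y
  let t : BoundedContinuousFunction X ℝ := shiftedBCF x₀ s hL (s x₀) fun y => by
    rw [abs_le]
    have h₁ := hs y x₀
    have h₂ := hd x₀ y
    rw [dist_comm y x₀] at h₁
    constructor <;> linarith
  have he : Isometry e := by
    refine Isometry.of_dist_eq fun x y => le_antisymm ?_ ?_
    · refine (BoundedContinuousFunction.dist_le dist_nonneg).2 fun w => ?_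
      change dist (dist x w - dist x₀ w) (dist y w - dist x₀ w) ≤ _
      rw [dist_sub_right]
      exact abs_dist_sub_le x y w
    -- The supremum defining the distance is attained at `y`.
    · have h := BoundedContinuousFunction.dist_coe_le_dist (f := e x) (g := e y) y
      change dist (dist x y - dist x₀ y) (dist y y - dist x₀ y) ≤ _ at h
      rw [dist_sub_right, dist_self, Real.dist_eq, sub_zero, abs_of_nonneg dist_nonneg] at h
      exact h
  obtain ⟨h, hh, hhe⟩ := hX X (BoundedContinuousFunction X ℝ) e id he LipschitzWith.id
  refine ⟨h t, fun x => ?_⟩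
  have hx : h (e x) = x := congrFun hhe x
  have hs0 : 0 ≤ s x := by
    have := hd x x
    rw [dist_self] at this
    linarith
  calc dist x (h t) = dist (h (e x)) (h t) := by rw [hx]
    _ ≤ dist (e x) t := by simpa using hh.dist_le_mul (e x) t
    _ ≤ s x := by
      refine (BoundedContinuousFunction.dist_le hs0).2 fun w => ?_
      change dist (dist x w - dist x₀ w) (s w - dist x₀ w) ≤ _
      rw [dist_sub_right, Real.dist_eq, abs_le]
      have h₁ := hs w x
      have h₂ := hd x w
      rw [dist_comm w x] at h₁
      constructor <;> linarith

/-- a metric space is injective in Met iff it is hyperconvex. -/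
theorem metric_injective_iff_hyperconvex
    {X : Type u} [MetricSpace X] :
    (∀ (A B : Type u) [MetricSpace A] [MetricSpace B]
      (g : A → B) (f : A → X), Isometry g → LipschitzWith 1 f →
      ∃ h : B → X, LipschitzWith 1 h ∧ h ∘ g = f)
    ↔ (∀ (ι : Type u) (p : ι → X) (r : ι → ℝ≥0∞),
        (∀ j k, edist (p j) (p k) ≤ r j + r k) →
        ∃ z, ∀ j, edist (p j) z ≤ r j) := by
  constructor
  · intro hX ι p r hpr
    by_cases hfin : ∃ j, r j ≠ ⊤
    · obtain ⟨j₀, hj₀⟩ := hfin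
      let J := {j // r j ≠ ⊤}
      have : Nonempty J := ⟨⟨j₀, hj₀⟩⟩
      let φ : X → J → ℝ := fun y j => dist y (p j) + (r j).toReal
      have hbdd : ∀ y, BddBelow (Set.range (φ y)) := fun y =>
        ⟨0, by rintro _ ⟨j, rfl⟩; exact add_nonneg dist_nonneg ENNReal.toReal_nonneg⟩
      have hreal : ∀ j k : J, dist (p j) (p k) ≤ (r j).toReal + (r k).toReal := by
        intro j k
        rw [dist_edist, ← ENNReal.toReal_add j.2 k.2]
        exact ENNReal.toReal_mono (ENNReal.add_ne_top.2 ⟨j.2, k.2⟩) (hpr j k)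
      obtain ⟨z, hz⟩ := exists_point_of_injective hX (p j₀) (fun y => ⨅ j, φ y j)
        (fun x y => by
          rw [← sub_le_iff_le_add]
          refine le_ciInf fun j => ?_
          have h₁ := ciInf_le (hbdd x) j
          have h₂ := dist_triangle x y (p j)
          simp only [φ] at h₁ ⊢
          linarith)
        (fun x y => by
          rw [← sub_le_iff_le_add]
          refine le_ciInf fun j => ?_
          rw [sub_le_comm]
          refine le_ciInf fun k => ?_
          have h₁ := dist_triangle4 x (p j) (p k) y
          have h₂ := hreal j k
          rw [dist_comm (p k) y] at h₁
          simp only [φ]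
          linarith)
      refine ⟨z, fun j => ?_⟩
      by_cases hj : r j = ⊤
      · simp [hj]
      · rw [edist_dist]
        refine ENNReal.ofReal_le_of_le_toReal ((hz (p j)).trans ?_)
        simpa [φ] using ciInf_le (hbdd (p j)) ⟨j, hj⟩
    · push Not at hfin
      -- All radii are infinite; extending the empty map to a point shows that `X` is nonempty.
      obtain ⟨h, -, -⟩ := hX (ULift.{u} Empty) PUnit.{u + 1} (fun a => a.down.elim)
        (fun a => a.down.elim) (fun a => a.down.elim) (fun a => a.down.elim)
      exact ⟨h PUnit.unit, fun j => by simp [hfin j]⟩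
  · intro hX A B _ _ g f hg hf
    have hS₀ : NonexpansiveRel (Set.range fun a => (g a, f a)) := by
      rintro _ ⟨a, rfl⟩ _ ⟨b, rfl⟩
      simpa [hg a b] using hf a b
    obtain ⟨S, hSsub, hS⟩ := zorn_subset_nonempty {S : Set (B × X) | NonexpansiveRel S}
      (by
        intro c hc hchain _
        refine ⟨⋃₀ c, ?_, fun s hs => Set.subset_sUnion_of_mem hs⟩
        rintro a ⟨s, hs, has⟩ b ⟨t, ht, hbt⟩
        rcases hchain.total hs ht with h | h
        · exact hc ht a (h has) b hbt
        · exact hc hs a has b (h hbt))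
      _ hS₀
    have hSrel : NonexpansiveRel S := hS.prop
    have htotal : ∀ b : B, ∃ x : X, (b, x) ∈ S := by
      intro b
      obtain ⟨z, hz⟩ := hX S (fun q => q.1.2) (fun q => edist q.1.1 b) fun q q' =>
        (hSrel q.1 q.2 q'.1 q'.2).trans (edist_triangle_right _ _ _)
      refine ⟨z, hS.le_of_ge (y := insert (b, z) S) ?_ (Set.subset_insert _ _)
        (Set.mem_insert _ _)⟩
      rintro q (rfl | hq) q' (rfl | hq')
      · simp
      · have := hz ⟨q', hq'⟩
        rwa [edist_comm, edist_comm b]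
      · exact hz ⟨q, hq⟩
      · exact hSrel q hq q' hq'
    choose h hh using htotal
    refine ⟨h, fun b b' => ?_, funext fun a => ?_⟩
    · simpa using hSrel _ (hh b) _ (hh b')
    · have := hSrel _ (hh (g a)) _ (hSsub ⟨a, rfl⟩)
      simpa using this
end

section
/- Let X be a metric space and let T(X) := {μ : X → ℝ≥0∞ | ∀ x, μ x = ⨆ y, (edist x y − μ y)} be its tight span, with σ μ λ := ⨆ x, (μ x − λ x), where − denotes truncated subtraction on ℝ≥0∞. Then: (i) σ is an extended metric on T(X), i.e., for all μ, λ, ν ∈ T(X), σ μ μ = 0, σ μ λ = σ λ μ, σ μ ν ≤ σ μ λ + σ λ ν, and σ μ λ = 0 implies μ = λ; (ii) for every x ∈ X the function (fun y => edist x y) belongs to T(X), and σ (fun y => edist x y) (fun y => edist x' y) = edist x x' for all x, x' ∈ X; (iii) (T(X), σ) is hyperconvex: for every index type ι and families p : ι → T(X), r : ι → ℝ≥0∞ with σ (p j) (p k) ≤ r j + r k for all j, k, there exists ζ ∈ T(X) with σ (p j) ζ ≤ r j for all j. -/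
/-!
Call `f : X → ℝ≥0∞` *admissible* if `edist x y ≤ f x + f y` for all `x`, `y`. Points of the
tight span are admissible, and they are exactly the pointwise minimal admissible functions;
only the direction "minimal implies tight" is needed (`IsAdmissible.mem_of_minimal`), and it holds
because lowering the single value `f x` to `⨆ y, (edist x y - f y)` keeps `f` admissible. By Zorn's
lemma there is a point of the tight span below every admissible function.

Symmetry of `σ` comes from tightness: if `lam ≤ μ + s` pointwise, then
`edist x y ≤ lam x + lam y ≤ lam x + μ y + s`, so `μ x = ⨆ y, (edist x y - μ y) ≤ lam x + s`.

For hyperconvexity, the function `x ↦ ⨅ j, (p j x + r j)` is admissible because of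
`σ (p j) (p k) ≤ r j + r k`, and any point `ζ` of the tight span below it satisfies
`σ ζ (p j) ≤ r j`.
-/

open scoped ENNReal

universe u

/-- The tight span of a metric space `X`: functions `μ : X → ℝ≥0∞` with
`μ x = ⨆ y, (edist x y - μ y)` for all `x`. -/
def metTightSpan (X : Type*) [MetricSpace X] : Set (X → ℝ≥0∞) :=
  {μ | ∀ x, μ x = ⨆ y, (edist x y - μ y)}

/-- The extended metric on the tight span: `σ μ λ = ⨆ x, (μ x - λ x)`. -/
noncomputable def metSigma {X : Type*} (μ lam : X → ℝ≥0∞) : ℝ≥0∞ :=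
  ⨆ x, (μ x - lam x)

/-- `f x + f y` dominates the distance of `x` and `y`, for all pairs of points. -/
def IsAdmissible {X : Type*} [MetricSpace X] (f : X → ℝ≥0∞) : Prop :=
  ∀ x y, edist x y ≤ f x + f y

theorem metSigma_le_iff {X : Type*} {μ lam : X → ℝ≥0∞} {s : ℝ≥0∞} :
    metSigma μ lam ≤ s ↔ ∀ x, μ x ≤ s + lam x := by
  simp [metSigma, iSup_le_iff, tsub_le_iff_right]

section

variable {X : Type*} [MetricSpace X]

theorem isAdmissible_of_mem {μ : X → ℝ≥0∞} (hμ : μ ∈ metTightSpan X) : IsAdmissible μ := by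
  intro x y
  rw [← tsub_le_iff_right]
  calc edist x y - μ y ≤ ⨆ z, (edist x z - μ z) := le_iSup (fun z => edist x z - μ z) y
    _ = μ x := (hμ x).symm

/-- Half of the symmetry of `σ`; only tightness of `μ` and admissibility of `lam` matter. -/
theorem metSigma_le_swap {μ lam : X → ℝ≥0∞} (hμ : μ ∈ metTightSpan X)
    (hlam : IsAdmissible lam) : metSigma μ lam ≤ metSigma lam μ := by
  rw [metSigma_le_iff]
  intro x
  rw [hμ x]
  refine iSup_le fun y => tsub_le_iff_right.2 ?_
  calc edist x y ≤ lam x + lam y := hlam x y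
    _ ≤ lam x + (metSigma lam μ + μ y) := by gcongr; exact metSigma_le_iff.1 le_rfl y
    _ = metSigma lam μ + lam x + μ y := by ring

theorem metSigma_comm {μ lam : X → ℝ≥0∞} (hμ : μ ∈ metTightSpan X)
    (hlam : lam ∈ metTightSpan X) : metSigma μ lam = metSigma lam μ :=
  le_antisymm (metSigma_le_swap hμ (isAdmissible_of_mem hlam))
    (metSigma_le_swap hlam (isAdmissible_of_mem hμ))

theorem IsAdmissible.mem_of_minimal {f : X → ℝ≥0∞} (hf : IsAdmissible f)
    (hmin : ∀ g, IsAdmissible g → g ≤ f → f ≤ g) : f ∈ metTightSpan X := by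
  classical
  intro x
  set s := ⨆ y, (edist x y - f y) with hs
  have hsf : s ≤ f x := iSup_le fun y => tsub_le_iff_right.2 (hf x y)
  have hd : ∀ y, edist x y ≤ s + f y := fun y =>
    tsub_le_iff_right.1 (le_iSup (fun y => edist x y - f y) y)
  refine le_antisymm ?_ hsf
  have hg : IsAdmissible (Function.update f x s) := by
    intro a b
    by_cases ha : a = x <;> by_cases hb : b = x
    · simp [ha, hb]
    · subst ha
      simpa [hb] using hd b
    · subst hb
      simpa [ha, edist_comm, add_comm] using hd a
    · simpa [ha, hb] using hf a b
  simpa using hmin _ hg (update_le_self_iff.2 hsf) x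

theorem IsAdmissible.exists_mem_le {f : X → ℝ≥0∞} (hf : IsAdmissible f) :
    ∃ ζ ∈ metTightSpan X, ζ ≤ f := by
  -- Zorn's lemma in the order dual: the lower bound of a chain is its pointwise infimum.
  obtain ⟨m, hfm, hm⟩ := zorn_le_nonempty₀ (α := (X → ℝ≥0∞)ᵒᵈ)
    {g | IsAdmissible (OrderDual.ofDual g)} (fun c hc hchain _ _ => by
      refine ⟨OrderDual.toDual fun x => ⨅ g : c, OrderDual.ofDual g.1 x, ?_, ?_⟩
      · intro x y
        change edist x y ≤ (⨅ g : c, OrderDual.ofDual g.1 x) + ⨅ g : c, OrderDual.ofDual g.1 y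
        rw [← tsub_le_iff_right]
        refine le_iInf fun g => ?_
        rw [tsub_le_iff_left, ← tsub_le_iff_right]
        refine le_iInf fun h => ?_
        rw [tsub_le_iff_left]
        rcases hchain.total g.2 h.2 with hgh | hgh
        · exact (hc h.2 x y).trans (by gcongr; exact hgh x)
        · exact (hc g.2 x y).trans (by gcongr; exact hgh y)
      · intro g hg x
        exact iInf_le (fun g : c => OrderDual.ofDual g.1 x) ⟨g, hg⟩)
    (OrderDual.toDual f) hf
  exact ⟨OrderDual.ofDual m,
    IsAdmissible.mem_of_minimal hm.prop fun g hg hgm => hm.le_of_ge (y := OrderDual.toDual g) hg hgm,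
    hfm⟩

theorem edist_mem_metTightSpan (x : X) : (fun y => edist x y) ∈ metTightSpan X := by
  intro y
  refine le_antisymm ?_ (iSup_le fun z => tsub_le_iff_right.2 ?_)
  · refine le_iSup_of_le x ?_
    simp [edist_comm]
  · simpa [edist_comm] using edist_triangle y x z

theorem metSigma_edist (x x' : X) :
    metSigma (fun y => edist x y) (fun y => edist x' y) = edist x x' := by
  refine le_antisymm (metSigma_le_iff.2 fun y => edist_triangle x x' y) ?_
  refine le_iSup_of_le x' ?_
  simp

theorem isAdmissible_iInf {ι : Type*} {p : ι → X → ℝ≥0∞} {r : ι → ℝ≥0∞}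
    (hp : ∀ j, p j ∈ metTightSpan X) (hr : ∀ j k, metSigma (p j) (p k) ≤ r j + r k) :
    IsAdmissible fun x => ⨅ j, (p j x + r j) := by
  intro x y
  rw [← tsub_le_iff_right]
  refine le_iInf fun j => ?_
  rw [tsub_le_iff_left, ← tsub_le_iff_right]
  refine le_iInf fun k => ?_
  rw [tsub_le_iff_right]
  calc edist x y ≤ p j x + p j y := isAdmissible_of_mem (hp j) x y
    _ ≤ p j x + (r j + r k + p k y) := by gcongr; exact metSigma_le_iff.1 (hr j k) y
    _ = p k y + r k + (p j x + r j) := by ring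

end

/-- Isbell's injective hull. The tight span of a metric space is
an extended metric space, the Kuratowski--Yoneda map embeds `X` isometrically
into it, and it is hyperconvex. -/
theorem metTightSpan_injective_hull
    (X : Type u) [MetricSpace X] :
    ((∀ μ ∈ metTightSpan X, ∀ lam ∈ metTightSpan X, ∀ ν ∈ metTightSpan X,
      metSigma μ μ = 0 ∧
      metSigma μ lam = metSigma lam μ ∧
      metSigma μ ν ≤ metSigma μ lam + metSigma lam ν ∧
      (metSigma μ lam = 0 → μ = lam))) ∧
    ((∀ x : X, (fun y => edist x y) ∈ metTightSpan X) ∧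
      (∀ x x' : X, metSigma (fun y => edist x y) (fun y => edist x' y) = edist x x')) ∧
    (∀ (ι : Type u) (p : ι → (X → ℝ≥0∞)) (r : ι → ℝ≥0∞),
      (∀ j, p j ∈ metTightSpan X) →
      (∀ j k, metSigma (p j) (p k) ≤ r j + r k) →
      ∃ ζ ∈ metTightSpan X, ∀ j, metSigma (p j) ζ ≤ r j) := by
  refine ⟨fun μ hμ lam hlam ν _ => ⟨?_, metSigma_comm hμ hlam, ?_, fun h => ?_⟩,
    ⟨edist_mem_metTightSpan, metSigma_edist⟩, fun ι p r hp hr => ?_⟩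
  · simp [metSigma]
  · rw [metSigma_le_iff]
    intro x
    calc μ x ≤ metSigma μ lam + lam x := metSigma_le_iff.1 le_rfl x
      _ ≤ metSigma μ lam + (metSigma lam ν + ν x) := by
        gcongr; exact metSigma_le_iff.1 le_rfl x
      _ = metSigma μ lam + metSigma lam ν + ν x := by ring
  · have h' := metSigma_comm hμ hlam ▸ h
    funext x
    exact le_antisymm (by simpa using metSigma_le_iff.1 h.le x)
      (by simpa using metSigma_le_iff.1 h'.le x)
  · obtain ⟨ζ, hζ, hle⟩ := (isAdmissible_iInf hp hr).exists_mem_le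
    refine ⟨ζ, hζ, fun j => ?_⟩
    rw [metSigma_comm (hp j) hζ, metSigma_le_iff]
    intro x
    rw [add_comm]
    exact (hle x).trans (iInf_le _ j)
end
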